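/- arXiv:1604.06997 — 4 statements merged into one kernel-verified Lean document; each statement's English description precedes it below -/
import Mathlib

section
/- Let R_G := {p ∈ G : key(OP(p)) < key(p)}. If p₁, p₂ ∈ R_G and p₁ ≠ p₂, then CP(p₁) ≠ CP(p₂). -/
open Finset

attribute [local instance] Classical.propDecidable

/-- A point in the plane: first coordinate is the key, second is the time. -/
abbrev Pt : Type := ℤ × ℤ

/-- `r` lies in the closed axis-parallel rectangle with opposite corners `p` and `q`. -/
def inRect (p q r : Pt) : Prop :=
  min p.1 q.1 ≤ r.1 ∧ r.1 ≤ max p.1 q.1 ∧ min p.2 q.2 ≤ r.2 ∧ r.2 ≤ max p.2 q.2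

/-- `r` lies in the open axis-parallel rectangle with opposite corners `p` and `q`. -/
def inOpenRect (p q r : Pt) : Prop :=
  min p.1 q.1 < r.1 ∧ r.1 < max p.1 q.1 ∧ min p.2 q.2 < r.2 ∧ r.2 < max p.2 q.2

/-- `S` is an arborally satisfied set. -/
def ArbSat (S : Finset Pt) : Prop :=
  ∀ p ∈ S, ∀ q ∈ S, p.1 = q.1 ∨ p.2 = q.2 ∨ ∃ r ∈ S, r ≠ p ∧ r ≠ q ∧ inRect p q r

/-- `X` is the permutation point set `{(σ(t), t) : 1 ≤ t ≤ n}` of some permutation `σ` of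
`{1, …, n}`. -/
def IsPermPointSet (n : ℕ) (X : Finset Pt) : Prop :=
  ∃ σ : Equiv.Perm (Fin n),
    X = Finset.univ.image (fun t : Fin n => ((((σ t : ℕ) : ℤ) + 1, ((t : ℕ) : ℤ) + 1) : Pt))

/-- The points added by GREEDY at time `t`, given the point set `X` and the set `G` of points
added before time `t`: for the point `p` of `X` with time `t` and each point `q` of time `< t`
with a different key such that the rectangle spanned by `p` and `q` contains no other point of
time `< t`, the point `(key q, t)` is added. -/
noncomputable def greedyStep (X G : Finset Pt) (t : ℤ) : Finset Pt :=
  (X.filter (fun p => p.2 = t)).biUnion (fun p =>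
    (((X ∪ G).filter (fun s => s.2 < t)).filter (fun q =>
      q.1 ≠ p.1 ∧ ∀ r ∈ (X ∪ G).filter (fun s => s.2 < t), inRect p q r → r = q)).image
      (fun q => ((q.1, t) : Pt)))

/-- All points added by GREEDY while processing times `1, …, t`. -/
noncomputable def greedyUpTo (X : Finset Pt) : ℕ → Finset Pt
  | 0 => ∅
  | t + 1 => greedyUpTo X t ∪ greedyStep X (greedyUpTo X t) ((t : ℤ) + 1)

/-- The set `G` of points added by GREEDY over the whole execution on a permutation point set
`X` of size `n`. -/
noncomputable def greedyG (n : ℕ) (X : Finset Pt) : Finset Pt := greedyUpTo X n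

/-- `OP r` is the point of `X` processed at the time at which `r` was added; for `r ∈ X`,
`OP r = r`. -/
noncomputable def OP (X : Finset Pt) (r : Pt) : Pt :=
  ((X.filter (fun p => p.2 = r.2)).toList).headI

/-- The first point of `S` above `p`: the point of `S` with the same key as `p`, smaller time,
and the largest such time. -/
noncomputable def firstAbove (S : Finset Pt) (p : Pt) : Pt :=
  (p.1, (((S.filter (fun q => q.1 = p.1 ∧ q.2 < p.2)).image Prod.snd).max).unbotD 0)

/-- The pair `CP(p) = (OP(p), OP(q))` where `q` is the first point of `X ∪ G` above `p`. -/
noncomputable def CP (X G : Finset Pt) (p : Pt) : Pt × Pt :=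
  (OP X p, OP X (firstAbove (X ∪ G) p))

/-- `CP(p) ∈ MMC` (*zig*). -/
def inMMC (X G : Finset Pt) (p : Pt) : Prop :=
  ((CP X G p).1.1 < p.1 ∧ (CP X G p).2.1 < (CP X G p).1.1 ∧ (CP X G p).2.2 < (CP X G p).1.2)
  ∨ (p.1 < (CP X G p).1.1 ∧ (CP X G p).1.1 < (CP X G p).2.1 ∧ (CP X G p).2.2 < (CP X G p).1.2)

/-- `CP(p) ∈ MFC` (*zag*). -/
def inMFC (X G : Finset Pt) (p : Pt) : Prop :=
  ((CP X G p).1.1 < p.1 ∧ p.1 ≤ (CP X G p).2.1 ∧ (CP X G p).2.2 < p.2)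
  ∨ (p.1 < (CP X G p).1.1 ∧ (CP X G p).2.1 ≤ p.1 ∧ (CP X G p).2.2 < p.2)

/-- A pair is good if no point of `X` lies in the open rectangle spanned by it. -/
def IsGoodPair (X : Finset Pt) (pr : Pt × Pt) : Prop :=
  ∀ r ∈ X, ¬ inOpenRect pr.1 pr.2 r

/-- `B` is a block of `X`: the set of points of `X` whose times lie in some interval, whose
keys form a set of consecutive integers; blocks are nonempty. -/
def IsBlock (X B : Finset Pt) : Prop :=
  B.Nonempty ∧ (∃ i j : ℤ, B = X.filter (fun p => i ≤ p.2 ∧ p.2 ≤ j)) ∧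
    ∃ c d : ℤ, B.image Prod.fst = Finset.Icc c d

/-- `Top(B)`: the point of `B` with the smallest time. -/
noncomputable def TopPt (B : Finset Pt) : Pt :=
  ((B.filter (fun p => ∀ q ∈ B, p.2 ≤ q.2)).toList).headI

/-- A decomposition tree of `X`: a rooted tree whose nodes are blocks of `X`, whose root is
`X`, whose leaves are exactly the singleton blocks, and in which the children of every
internal node partition it. -/
structure DecompTree (X : Finset Pt) where
  nodes : Finset (Finset Pt)
  parent : Finset Pt → Finset Pt
  isBlock_nodes : ∀ B ∈ nodes, IsBlock X B
  root_mem : X ∈ nodes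
  parent_mem : ∀ B ∈ nodes, B ≠ X → parent B ∈ nodes
  ssubset_parent : ∀ B ∈ nodes, B ≠ X → B ⊂ parent B
  leaf_iff : ∀ B ∈ nodes, (¬ ∃ C ∈ nodes, C ≠ X ∧ parent C = B) ↔ B.card = 1
  children_partition : ∀ B ∈ nodes, B.card ≠ 1 →
    ∀ x ∈ B, ∃! C, C ∈ nodes ∧ C ≠ X ∧ parent C = B ∧ x ∈ C

/-- The children of a node `B` in a decomposition tree. -/
noncomputable def DecompTree.children {X : Finset Pt} (T : DecompTree X) (B : Finset Pt) :
    Finset (Finset Pt) :=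
  T.nodes.filter (fun C => C ≠ X ∧ T.parent C = B)

/-- `X` is `k`-decomposable: it admits a decomposition tree in which every node has at most
`k` children. -/
def kDecomposable (k : ℕ) (X : Finset Pt) : Prop :=
  ∃ T : DecompTree X, ∀ B ∈ T.nodes, (T.children B).card ≤ k

/-- `RT(p)`: the node of the decomposition tree closest to the root (i.e. containing all
others) among the nodes `B` with `Top(B) = p`. -/
noncomputable def RT {X : Finset Pt} (T : DecompTree X) (p : Pt) : Finset Pt :=
  (((T.nodes.filter (fun B => TopPt B = p)).filter
      (fun B => ∀ C ∈ T.nodes, TopPt C = p → C ⊆ B)).toList).headI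

/-- The points added by GREEDY (`G`) while processing `Top(B)` that lie to the left of
`Top(B)`. -/
noncomputable def leftSet (G B : Finset Pt) : Finset Pt :=
  G.filter (fun s => s.2 = (TopPt B).2 ∧ s.1 < (TopPt B).1)

/-- `Left(B)`: among the points added by GREEDY while processing `Top(B)` with key less than
`key (Top B)`, the one with the largest key (junk if none exists). -/
noncomputable def leftPt (G B : Finset Pt) : Pt :=
  (((leftSet G B).filter (fun s => ∀ r ∈ leftSet G B, r.1 ≤ s.1)).toList).headI

/-- The points added by GREEDY (`G`) while processing `Top(B)` that lie to the right of
`Top(B)`. -/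
noncomputable def rightSet (G B : Finset Pt) : Finset Pt :=
  G.filter (fun s => s.2 = (TopPt B).2 ∧ (TopPt B).1 < s.1)

/-- `Right(B)`: among the points added by GREEDY while processing `Top(B)` with key greater
than `key (Top B)`, the one with the smallest key (junk if none exists). -/
noncomputable def rightPt (G B : Finset Pt) : Pt :=
  (((rightSet G B).filter (fun s => ∀ r ∈ rightSet G B, s.1 ≤ r.1)).toList).headI

/-!
The pair `CP p` remembers the point `x` processed when `p` was added, hence the time of `p`, and
the time of the first point `q` above `p`. The point seen by GREEDY when it added `p` is `q`
itself, as any later point above `p` would lie in the rectangle of `x` and the point seen. But `x`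
cannot see two points on its right at the same time, as the nearer one would lie in the rectangle
of the farther one. So `CP p` determines `q`, and with it the key of `p`.
-/

/-- The points of `S` with time less than `t`; for `S = X ∪ G` this is the set `P` consulted by
GREEDY at time `t`. -/
noncomputable def pointsBefore (S : Finset Pt) (t : ℤ) : Finset Pt :=
  S.filter (fun s => s.2 < t)

/-- GREEDY, processing `x`, sees the point `q` of `P`: `q` is the only point of `P` in the
rectangle with corners `x` and `q`. -/
structure GreedySees (P : Finset Pt) (x q : Pt) : Prop where
  mem : q ∈ P
  eq_of_inRect : ∀ r ∈ P, inRect x q r → r = q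

section Sight

variable {S P : Finset Pt} {x p q q₁ q₂ : Pt}

lemma mem_pointsBefore {t : ℤ} : p ∈ pointsBefore S t ↔ p ∈ S ∧ p.2 < t := by
  simp [pointsBefore]

lemma GreedySees.eq_of_time_eq (h₁ : GreedySees P x q₁) (h₂ : GreedySees P x q₂)
    (hk₁ : x.1 ≤ q₁.1) (hk₂ : x.1 ≤ q₂.1) (ht : q₁.2 = q₂.2) : q₁ = q₂ := by
  rcases le_total q₁.1 q₂.1 with hle | hle
  · exact h₂.eq_of_inRect q₁ h₁.mem (by simp only [inRect]; omega)
  · exact (h₁.eq_of_inRect q₂ h₂.mem (by simp only [inRect]; omega)).symm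

lemma firstAbove_eq_of_isGreatest
    (h : IsGreatest {t | t < p.2 ∧ ((p.1, t) : Pt) ∈ S} q.2) (hk : q.1 = p.1) :
    firstAbove S p = q := by
  have hcoe : ((S.filter (fun r => r.1 = p.1 ∧ r.2 < p.2)).image Prod.snd : Set ℤ) =
      {t | t < p.2 ∧ ((p.1, t) : Pt) ∈ S} := by
    ext t
    simp [and_comm]
  rw [← hcoe] at h
  have hmax : ((S.filter (fun r => r.1 = p.1 ∧ r.2 < p.2)).image Prod.snd).max = q.2 :=
    (coe_max' (coe_nonempty.1 h.nonempty)).symm.trans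
      (congrArg _ ((isGreatest_max' _ _).unique h))
  rw [firstAbove, hmax, WithBot.unbotD_coe, ← hk]

lemma GreedySees.firstAbove_eq (h : GreedySees (pointsBefore S p.2) x q) (ht : p.2 ≤ x.2)
    (hk : q.1 = p.1) : firstAbove S p = q := by
  obtain ⟨hqS, hqp⟩ := mem_pointsBefore.1 h.mem
  refine firstAbove_eq_of_isGreatest ⟨⟨hqp, by rwa [← hk]⟩, fun t ⟨htp, htS⟩ => ?_⟩ hk
  by_contra! hlt
  have heq : (p.1, t) = q :=
    h.eq_of_inRect _ (mem_pointsBefore.2 ⟨htS, htp⟩) (by simp only [inRect]; omega)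
  exact hlt.ne (congrArg Prod.snd heq).symm

end Sight

section Greedy

variable {X G : Finset Pt} {p : Pt} {n : ℕ}

lemma mem_greedyStep {t : ℤ} :
    p ∈ greedyStep X G t ↔
      p.2 = t ∧ ∃ x ∈ X, x.2 = t ∧
        ∃ q, GreedySees (pointsBefore (X ∪ G) t) x q ∧ q.1 ≠ x.1 ∧ q.1 = p.1 := by
  simp only [greedyStep, mem_biUnion, mem_image, mem_filter]
  constructor
  · rintro ⟨x, ⟨hx, hxt⟩, q, ⟨⟨hq, hqt⟩, hne, hempty⟩, rfl⟩
    exact ⟨rfl, x, hx, hxt, q,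
      ⟨mem_pointsBefore.2 ⟨hq, hqt⟩, fun r hr => hempty r (mem_pointsBefore.1 hr)⟩, hne, rfl⟩
  · rintro ⟨rfl, x, hx, hxt, q, hsees, hne, hk⟩
    exact ⟨x, ⟨hx, hxt⟩, q, ⟨mem_pointsBefore.1 hsees.mem, hne,
      fun r hr => hsees.eq_of_inRect r (mem_pointsBefore.2 hr)⟩, Prod.ext hk rfl⟩

lemma mem_greedyUpTo :
    p ∈ greedyUpTo X n ↔ ∃ m < n, p ∈ greedyStep X (greedyUpTo X m) ((m : ℤ) + 1) := by
  induction n with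
  | zero => simp [greedyUpTo]
  | succ n ih => rw [greedyUpTo, mem_union, ih, Nat.exists_lt_succ_right]

lemma pointsBefore_union_greedyUpTo {m : ℕ} (hmn : m ≤ n) :
    pointsBefore (X ∪ greedyUpTo X n) ((m : ℤ) + 1) =
      pointsBefore (X ∪ greedyUpTo X m) ((m : ℤ) + 1) := by
  ext r
  simp only [mem_pointsBefore, mem_union, and_congr_left_iff]
  refine fun hrm => or_congr_right ?_
  rw [mem_greedyUpTo, mem_greedyUpTo]
  constructor
  · rintro ⟨k, -, hr⟩
    have hrk : r.2 = (k : ℤ) + 1 := (mem_greedyStep.1 hr).1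
    exact ⟨k, by omega, hr⟩
  · rintro ⟨k, hkm, hr⟩
    exact ⟨k, hkm.trans_le hmn, hr⟩

lemma exists_greedySees_of_mem_greedyUpTo (hp : p ∈ greedyUpTo X n) :
    ∃ x ∈ X, x.2 = p.2 ∧
      ∃ q, GreedySees (pointsBefore (X ∪ greedyUpTo X n) p.2) x q ∧ q.1 = p.1 := by
  obtain ⟨m, hmn, hm⟩ := mem_greedyUpTo.1 hp
  obtain ⟨hpm, x, hx, hxm, q, hsees, -, hk⟩ := mem_greedyStep.1 hm
  rw [← pointsBefore_union_greedyUpTo hmn.le, ← hpm] at hsees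
  exact ⟨x, hx, hxm.trans hpm.symm, q, hsees, hk⟩

end Greedy

section DistinctTimes

variable {X : Finset Pt} {p : Pt} {n : ℕ}

lemma OP_eq_of_time_eq (hX : Set.InjOn Prod.snd (X : Set Pt)) {x : Pt}
    (hx : x ∈ X) (ht : x.2 = p.2) : OP X p = x := by
  have hfilter : X.filter (fun y => y.2 = p.2) = {x} := by
    ext y
    simp only [mem_filter, mem_singleton]
    exact ⟨fun ⟨hy, hyp⟩ => hX hy hx (hyp.trans ht.symm), fun hyx => hyx ▸ ⟨hx, ht⟩⟩
  rw [OP, hfilter, toList_singleton, List.headI_cons]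

lemma time_OP (hX : Set.InjOn Prod.snd (X : Set Pt)) (hp : p ∈ X ∪ greedyUpTo X n) :
    (OP X p).2 = p.2 := by
  obtain ⟨x, hx, hxp⟩ : ∃ x ∈ X, x.2 = p.2 := by
    rcases mem_union.1 hp with hpX | hpG
    · exact ⟨p, hpX, rfl⟩
    · obtain ⟨x, hx, hxp, -⟩ := exists_greedySees_of_mem_greedyUpTo hpG
      exact ⟨x, hx, hxp⟩
  rw [OP_eq_of_time_eq hX hx hxp, hxp]

lemma greedySees_firstAbove (hX : Set.InjOn Prod.snd (X : Set Pt))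
    (hp : p ∈ greedyUpTo X n) :
    GreedySees (pointsBefore (X ∪ greedyUpTo X n) p.2) (OP X p)
      (firstAbove (X ∪ greedyUpTo X n) p) := by
  obtain ⟨x, hx, hxp, q, hsees, hk⟩ := exists_greedySees_of_mem_greedyUpTo hp
  rwa [OP_eq_of_time_eq hX hx hxp, hsees.firstAbove_eq hxp.ge hk]

theorem cp_injective_on_right_general (hX : Set.InjOn Prod.snd (X : Set Pt)) :
    Set.InjOn (CP X (greedyG n X)) {p | p ∈ greedyG n X ∧ (OP X p).1 < p.1} := by
  rintro p₁ ⟨h₁, hk₁⟩ p₂ ⟨h₂, hk₂⟩ hCP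
  obtain ⟨hOP, hOPabove⟩ := Prod.mk.inj hCP
  have htime : p₁.2 = p₂.2 := by
    rw [← time_OP hX (mem_union_right X h₁), hOP, time_OP hX (mem_union_right X h₂)]
  have hsees₁ := greedySees_firstAbove hX h₁
  have hsees₂ := greedySees_firstAbove hX h₂
  have htime_above :
      (firstAbove (X ∪ greedyG n X) p₁).2 = (firstAbove (X ∪ greedyG n X) p₂).2 :=
    calc
      _ = (OP X (firstAbove (X ∪ greedyG n X) p₁)).2 :=
        (time_OP hX (mem_pointsBefore.1 hsees₁.mem).1).symm
      _ = (OP X (firstAbove (X ∪ greedyG n X) p₂)).2 := by rw [hOPabove]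
      _ = _ := time_OP hX (mem_pointsBefore.1 hsees₂.mem).1
  rw [← htime, ← hOP] at hsees₂
  have habove : firstAbove (X ∪ greedyG n X) p₁ = firstAbove (X ∪ greedyG n X) p₂ :=
    hsees₁.eq_of_time_eq hsees₂ hk₁.le (hOP ▸ hk₂.le) htime_above
  have hkey : p₁.1 = p₂.1 := (Prod.mk.inj habove).1
  exact Prod.ext hkey htime

end DistinctTimes

lemma IsPermPointSet.injOn_time {n : ℕ} {X : Finset Pt} (hX : IsPermPointSet n X) :
    Set.InjOn Prod.snd (X : Set Pt) := by
  obtain ⟨σ, rfl⟩ := hX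
  simp only [coe_image, coe_univ, Set.image_univ]
  rintro _ ⟨s, rfl⟩ _ ⟨t, rfl⟩ hst
  obtain rfl : s = t := Fin.ext (by simpa using hst)
  rfl

/-- On `R_G := {p ∈ G : key(OP(p)) < key(p)}`, the map `CP` is injective. -/
theorem cp_injective_on_right (n : ℕ) (X : Finset Pt) (hX : IsPermPointSet n X)
    (p₁ p₂ : Pt) (h₁ : p₁ ∈ greedyG n X) (h₂ : p₂ ∈ greedyG n X)
    (hk₁ : (OP X p₁).1 < p₁.1) (hk₂ : (OP X p₂).1 < p₂.1) (hne : p₁ ≠ p₂) :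
    CP X (greedyG n X) p₁ ≠ CP X (greedyG n X) p₂ :=
  fun hCP => hne (cp_injective_on_right_general hX.injOn_time ⟨h₁, hk₁⟩ ⟨h₂, hk₂⟩ hCP)
end

section
/- For every block B of X, GREEDY does not put any marked point in BOX(B) while processing Top(B); that is, every point added by GREEDY at time time(Top(B)) has key different from key(p) for every p ∈ B. -/
open Finset

attribute [local instance] Classical.propDecidable

/-!
GREEDY adds a point only when an earlier point has the same key, so tracing added points back in
time ends at an earlier point of `X` with the same key. Over the keys of a block, `X` has only
the points of the block, none of which precedes its top.
-/

theorem headI_mem_of_ne_nil {α : Type*} [Inhabited α] {l : List α} (hl : l ≠ []) :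
    l.headI ∈ l := by
  obtain ⟨a, l', rfl⟩ := List.exists_cons_of_ne_nil hl
  exact List.mem_cons_self

section

variable {X G B : Finset Pt} {s p : Pt} {t : ℤ}

theorem exists_fst_eq_snd_lt_of_mem_greedyStep (hs : s ∈ greedyStep X G t) :
    ∃ q ∈ X ∪ G, q.1 = s.1 ∧ q.2 < s.2 := by
  simp only [greedyStep, mem_biUnion, mem_image, mem_filter] at hs
  obtain ⟨-, -, q, ⟨⟨hq, hqt⟩, -⟩, rfl⟩ := hs
  exact ⟨q, hq, rfl, hqt⟩

theorem exists_mem_fst_eq_snd_lt_of_mem_greedyUpTo {m : ℕ} (hs : s ∈ greedyUpTo X m) :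
    ∃ x ∈ X, x.1 = s.1 ∧ x.2 < s.2 := by
  induction m generalizing s with
  | zero => exact absurd hs (notMem_empty s)
  | succ m ih =>
    rcases mem_union.mp hs with hs | hs
    · exact ih hs
    · obtain ⟨q, hq, hqs, hlt⟩ := exists_fst_eq_snd_lt_of_mem_greedyStep hs
      rcases mem_union.mp hq with hqX | hqG
      · exact ⟨q, hqX, hqs, hlt⟩
      · obtain ⟨x, hx, hxq, hxlt⟩ := ih hqG
        exact ⟨x, hx, hxq.trans hqs, hxlt.trans hlt⟩

theorem snd_TopPt_le (hp : p ∈ B) : (TopPt B).2 ≤ p.2 := by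
  obtain ⟨m, hm, hmin⟩ := B.exists_min_image Prod.snd ⟨p, hp⟩
  have hne : {r ∈ B | ∀ q ∈ B, r.2 ≤ q.2}.Nonempty := ⟨m, mem_filter.mpr ⟨hm, hmin⟩⟩
  have hTop : TopPt B ∈ {r ∈ B | ∀ q ∈ B, r.2 ≤ q.2} :=
    mem_toList.mp (headI_mem_of_ne_nil hne.toList_ne_nil)
  exact (mem_filter.mp hTop).2 p hp

theorem IsPermPointSet.injOn_fst {n : ℕ} (hX : IsPermPointSet n X) :
    Set.InjOn Prod.fst (X : Set Pt) := by
  obtain ⟨σ, rfl⟩ := hX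
  simp only [coe_image, coe_univ, Set.image_univ]
  rintro _ ⟨a, rfl⟩ _ ⟨b, rfl⟩ hab
  have hσ : σ a = σ b := Fin.ext (by simpa using hab)
  rw [σ.injective hσ]

theorem IsBlock.subset (hB : IsBlock X B) : B ⊆ X := by
  obtain ⟨-, ⟨i, j, rfl⟩, -⟩ := hB
  exact filter_subset _ _

end

theorem top_adds_nothing_in_box_general {X B : Finset Pt}
    (hB : ∀ p ∈ B, ∀ x ∈ X, x.1 = p.1 → x ∈ B) (m : ℕ) :
    ∀ s ∈ greedyUpTo X m, s.2 ≤ (TopPt B).2 → ∀ p ∈ B, s.1 ≠ p.1 := by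
  intro s hs htop p hp hkey
  obtain ⟨x, hx, hxs, hlt⟩ := exists_mem_fst_eq_snd_lt_of_mem_greedyUpTo hs
  have hxB : x ∈ B := hB p hp x hx (hxs.trans hkey)
  exact ((snd_TopPt_le hxB).trans_lt (hlt.trans_le htop)).false

/-- For every block `B` of `X`, GREEDY does not put any marked point in
`BOX(B)` while processing `Top(B)`: every point added at time `time(Top(B))` has key
different from the key of every point of `B`. -/
theorem top_adds_nothing_in_box (n : ℕ) (X : Finset Pt) (hX : IsPermPointSet n X)
    (B : Finset Pt) (hB : IsBlock X B) :
    ∀ s ∈ greedyG n X, s.2 = (TopPt B).2 → ∀ p ∈ B, s.1 ≠ p.1 :=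
  fun s hs htop => top_adds_nothing_in_box_general
    (fun _ hp _ hx hxp => hX.injOn_fst hx (hB.subset hp) hxp ▸ hp) n s hs htop.le
end

section
/- Fix a decomposition tree of X. Let r ∈ X with B′ := RT(r) not the root, and let B be the parent of B′ in the decomposition tree. Then every point s added by GREEDY while processing r satisfies: s ∈ BOX(B), or Left(B) exists and s is below Left(B) (key(s) = key(Left(B)) and time(s) > time(Left(B))), or Right(B) exists and s is below Right(B). -/
open Finset

attribute [local instance] Classical.propDecidable

/-!
Let `a = Top(B)`, and suppose that GREEDY, processing a later point of `B`, adds a point whose key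
`k` is not a key of `B`. The first point added in column `k` after the time of `a` is added for
some `p ∈ B` because of a point `q` of column `k` not later than `a`. Column `key(a)` is empty
before `a`, so a point is added in the row of `a` at a key between `key(a)` and `k`, possibly at
`k` itself. No point added in the row of `a` has a key of `B`, because it would lie below a point
of `B` earlier than `a`. Hence every such point between `key(a)` and `k` lies in the rectangle
with corners `p` and `q`, so it is `q`. Thus `k` is the key nearest to `key(a)`, on its side,
among the points added in the row of `a`.
-/

theorem headI_toList_mem {α : Type*} [Inhabited α] {S : Finset α} (hS : S.Nonempty) :
    S.toList.headI ∈ S := by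
  obtain ⟨a, l, hl⟩ := List.exists_cons_of_ne_nil hS.toList_ne_nil
  rw [← mem_toList, hl]
  exact List.mem_cons_self

theorem topPt_mem_filter {B : Finset Pt} (hB : B.Nonempty) :
    TopPt B ∈ B.filter (fun p => ∀ q ∈ B, p.2 ≤ q.2) := by
  obtain ⟨p, hp, hmin⟩ := exists_min_image B Prod.snd hB
  exact headI_toList_mem ⟨p, mem_filter.2 ⟨hp, hmin⟩⟩

theorem topPt_mem {B : Finset Pt} (hB : B.Nonempty) : TopPt B ∈ B :=
  (mem_filter.1 (topPt_mem_filter hB)).1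

theorem snd_topPt_le {B : Finset Pt} {p : Pt} (hp : p ∈ B) : (TopPt B).2 ≤ p.2 :=
  (mem_filter.1 (topPt_mem_filter ⟨p, hp⟩)).2 p hp

theorem topPt_singleton (p : Pt) : TopPt {p} = p :=
  mem_singleton.1 (topPt_mem (singleton_nonempty p))

theorem leftPt_mem_filter {G B : Finset Pt} (h : (leftSet G B).Nonempty) :
    leftPt G B ∈ (leftSet G B).filter (fun s => ∀ m ∈ leftSet G B, m.1 ≤ s.1) := by
  obtain ⟨p, hp, hmax⟩ := exists_max_image (leftSet G B) Prod.fst h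
  exact headI_toList_mem ⟨p, mem_filter.2 ⟨hp, hmax⟩⟩

theorem leftPt_mem_leftSet {G B : Finset Pt} (h : (leftSet G B).Nonempty) :
    leftPt G B ∈ leftSet G B :=
  (mem_filter.1 (leftPt_mem_filter h)).1

theorem fst_le_fst_leftPt {G B : Finset Pt} {m : Pt} (hm : m ∈ leftSet G B) :
    m.1 ≤ (leftPt G B).1 :=
  (mem_filter.1 (leftPt_mem_filter ⟨m, hm⟩)).2 m hm

theorem rightPt_mem_filter {G B : Finset Pt} (h : (rightSet G B).Nonempty) :
    rightPt G B ∈ (rightSet G B).filter (fun s => ∀ m ∈ rightSet G B, s.1 ≤ m.1) := by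
  obtain ⟨p, hp, hmin⟩ := exists_min_image (rightSet G B) Prod.fst h
  exact headI_toList_mem ⟨p, mem_filter.2 ⟨hp, hmin⟩⟩

theorem rightPt_mem_rightSet {G B : Finset Pt} (h : (rightSet G B).Nonempty) :
    rightPt G B ∈ rightSet G B :=
  (mem_filter.1 (rightPt_mem_filter h)).1

theorem fst_rightPt_le_fst {G B : Finset Pt} {m : Pt} (hm : m ∈ rightSet G B) :
    (rightPt G B).1 ≤ m.1 :=
  (mem_filter.1 (rightPt_mem_filter ⟨m, hm⟩)).2 m hm

/-- `p` sees `q` over `S`: `q` is a point of `S` earlier than `p` and off its column, and the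
rectangle with corners `p` and `q` holds no other point of `S` earlier than `p`. Processing `p`,
GREEDY adds a point in the column of each `q` that `p` sees. -/
structure Sees (S : Finset Pt) (p q : Pt) : Prop where
  mem : q ∈ S
  snd_lt : q.2 < p.2
  fst_ne : q.1 ≠ p.1
  eq_of_inRect : ∀ z ∈ S, z.2 < p.2 → inRect p q z → z = q

theorem Sees.of_subset {S S' : Finset Pt} {p q : Pt} (h : Sees S p q) (hq : q ∈ S')
    (hS : ∀ z ∈ S', z.2 < p.2 → z ∈ S) : Sees S' p q :=
  ⟨hq, h.snd_lt, h.fst_ne, fun z hz hzp => h.eq_of_inRect z (hS z hz hzp) hzp⟩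

theorem sees_congr {S S' : Finset Pt} {p q : Pt} (h : ∀ z, z.2 < p.2 → (z ∈ S ↔ z ∈ S')) :
    Sees S p q ↔ Sees S' p q :=
  ⟨fun hpq => hpq.of_subset ((h q hpq.snd_lt).1 hpq.mem) fun z hz hzp => (h z hzp).2 hz,
    fun hpq => hpq.of_subset ((h q hpq.snd_lt).2 hpq.mem) fun z hz hzp => (h z hzp).1 hz⟩

theorem exists_sees_inRect {S : Finset Pt} {p q : Pt} (hq : q ∈ S) (hqp : q.2 < p.2)
    (hcol : ∀ z ∈ S, z.2 < p.2 → z.1 ≠ p.1) : ∃ z, Sees S p z ∧ inRect p q z := by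
  -- A point of the rectangle at minimal `ℓ¹`-distance from `p` is seen by `p`.
  obtain ⟨z, hz, hmin⟩ := exists_min_image (S.filter fun z => z.2 < p.2 ∧ inRect p q z)
    (fun z => |z.1 - p.1| + |z.2 - p.2|)
    ⟨q, mem_filter.2 ⟨hq, hqp, by simp only [inRect]; omega⟩⟩
  obtain ⟨hzS, hzp, hzq⟩ := mem_filter.1 hz
  refine ⟨z, ⟨hzS, hzp, hcol z hzS hzp, fun w hw hwp hwz => ?_⟩, hzq⟩
  simp only [inRect] at hzq hwz
  have hle := hmin w (mem_filter.2 ⟨hw, hwp, by simp only [inRect]; omega⟩)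
  simp only [abs_eq_max_neg] at hle
  exact Prod.ext (by omega) (by omega)

theorem mem_greedyStep_iff {X G : Finset Pt} {t : ℤ} {s : Pt} :
    s ∈ greedyStep X G t ↔
      s.2 = t ∧ ∃ p ∈ X, p.2 = s.2 ∧ ∃ q, Sees (X ∪ G) p q ∧ q.1 = s.1 := by
  simp only [greedyStep, mem_biUnion, mem_image, mem_filter]
  constructor
  · rintro ⟨p, ⟨hp, rfl⟩, q, ⟨⟨hq, hqp⟩, hne, hempty⟩, rfl⟩
    exact ⟨rfl, p, hp, rfl, q, ⟨hq, hqp, hne, fun z hz hzp => hempty z ⟨hz, hzp⟩⟩, rfl⟩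
  · rintro ⟨rfl, p, hp, hps, q, ⟨hq, hqp, hne, hempty⟩, hqs⟩
    rw [hps] at hqp hempty
    exact ⟨p, ⟨hp, hps⟩, q, ⟨⟨hq, hqp⟩, hne, fun z hz => hempty z hz.1 hz.2⟩, by rw [hqs]⟩

theorem mem_greedyUpTo_iff {X : Finset Pt} {n : ℕ} {s : Pt} :
    s ∈ greedyUpTo X n ↔ (0 < s.2 ∧ s.2 ≤ n) ∧
      ∃ p ∈ X, p.2 = s.2 ∧ ∃ q, Sees (X ∪ greedyUpTo X n) p q ∧ q.1 = s.1 := by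
  induction n with
  | zero =>
    simp only [greedyUpTo, notMem_empty, false_iff]
    omega
  | succ n ih =>
    have hsees : ∀ p q : Pt, p.2 ≤ n + 1 →
        (Sees (X ∪ greedyUpTo X (n + 1)) p q ↔ Sees (X ∪ greedyUpTo X n) p q) := by
      refine fun p q hp => sees_congr fun z hz => ?_
      have hstep : z ∉ greedyStep X (greedyUpTo X n) (n + 1) := fun h => by
        have htime := (mem_greedyStep_iff.1 h).1
        omega
      simp only [greedyUpTo, mem_union, hstep, or_false]
    have hbound : (0 < s.2 ∧ s.2 ≤ n) ∨ s.2 = n + 1 ↔ 0 < s.2 ∧ s.2 ≤ (n + 1 : ℕ) := by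
      omega
    rw [greedyUpTo, mem_union, ih, mem_greedyStep_iff, ← or_and_right, hbound]
    refine and_congr_right fun hs => exists_congr fun p => and_congr_right fun _ =>
      and_congr_right fun hps => exists_congr fun q => and_congr_left' (hsees p q ?_).symm
    omega

theorem mem_greedyG_iff {n : ℕ} {X : Finset Pt} {s : Pt} :
    s ∈ greedyG n X ↔ (0 < s.2 ∧ s.2 ≤ n) ∧
      ∃ p ∈ X, p.2 = s.2 ∧ ∃ q, Sees (X ∪ greedyG n X) p q ∧ q.1 = s.1 :=
  mem_greedyUpTo_iff

section Greedy

variable {n : ℕ} {X : Finset Pt}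

theorem exists_sees_of_mem_greedyG {s : Pt} {t : ℤ} (hs : s ∈ greedyG n X) (ht : t < s.2) :
    ∃ p ∈ X, t < p.2 ∧ p.2 ≤ s.2 ∧
      ∃ q, Sees (X ∪ greedyG n X) p q ∧ q.1 = s.1 ∧ (q ∈ X ∨ q.2 ≤ t) := by
  -- Look at the first point added in the column of `s` after time `t`.
  obtain ⟨u, hu, hfirst⟩ := exists_min_image
    ((greedyG n X).filter fun u => u.1 = s.1 ∧ t < u.2) Prod.snd ⟨s, mem_filter.2 ⟨hs, rfl, ht⟩⟩
  obtain ⟨huG, hus, htu⟩ := mem_filter.1 hu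
  obtain ⟨-, p, hp, hpu, q, hpq, hqu⟩ := mem_greedyG_iff.1 huG
  have hle : u.2 ≤ s.2 := hfirst s (mem_filter.2 ⟨hs, rfl, ht⟩)
  refine ⟨p, hp, by omega, by omega, q, hpq, by omega, ?_⟩
  refine (mem_union.1 hpq.mem).imp_right fun hqG => ?_
  by_contra! htq
  have hule := hfirst q (mem_filter.2 ⟨hqG, by omega, htq⟩)
  have hqp := hpq.snd_lt
  omega

theorem exists_mem_above_of_mem_greedyG {s : Pt} (hs : s ∈ greedyG n X) :
    ∃ x ∈ X, x.1 = s.1 ∧ x.2 < s.2 := by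
  obtain ⟨p, -, -, hps, q, hpq, hqs, hq⟩ :=
    exists_sees_of_mem_greedyG hs (mem_greedyG_iff.1 hs).1.1
  have hqX : q ∈ X := by
    rcases mem_union.1 hpq.mem with hqX | hqG
    · exact hqX
    · have hqpos := (mem_greedyG_iff.1 hqG).1.1
      exact hq.resolve_right hqpos.not_ge
  exact ⟨q, hqX, hqs, hpq.snd_lt.trans_le hps⟩

theorem fst_ne_of_snd_lt (hkey : Set.InjOn Prod.fst (X : Set Pt)) {a z : Pt} (ha : a ∈ X)
    (hz : z ∈ X ∪ greedyG n X) (hza : z.2 < a.2) : z.1 ≠ a.1 := by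
  intro h
  rcases mem_union.1 hz with hzX | hzG
  · rw [hkey hzX ha h] at hza
    exact hza.false
  · obtain ⟨x, hx, hxz, hxz'⟩ := exists_mem_above_of_mem_greedyG hzG
    rw [hkey hx ha (hxz.trans h)] at hxz'
    exact (hxz'.trans hza).false

theorem exists_mem_greedyG_inRect (hkey : Set.InjOn Prod.fst (X : Set Pt)) {a q : Pt}
    (ha : a ∈ X) (hpos : 0 < a.2) (han : a.2 ≤ n) (hq : q ∈ X ∪ greedyG n X) (hqa : q.2 < a.2) :
    ∃ m ∈ greedyG n X, m.2 = a.2 ∧ m.1 ≠ a.1 ∧ inRect a q m := by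
  obtain ⟨z, haz, hz⟩ := exists_sees_inRect hq hqa fun z => fst_ne_of_snd_lt hkey ha
  refine ⟨(z.1, a.2), mem_greedyG_iff.2 ⟨⟨hpos, han⟩, a, ha, rfl, z, haz, rfl⟩, rfl,
    haz.fst_ne, ?_⟩
  simp only [inRect] at hz ⊢
  omega

end Greedy

namespace IsBlock

variable {X B : Finset Pt}

theorem subset_s16 (hB : IsBlock X B) : B ⊆ X := by
  obtain ⟨-, ⟨i, j, rfl⟩, -⟩ := hB
  exact filter_subset _ _

theorem mem_of_snd_le_of_le (hB : IsBlock X B) {p q x : Pt} (hp : p ∈ B) (hq : q ∈ B)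
    (hx : x ∈ X) (hpx : p.2 ≤ x.2) (hxq : x.2 ≤ q.2) : x ∈ B := by
  obtain ⟨-, ⟨i, j, rfl⟩, -⟩ := hB
  rw [mem_filter] at hp hq ⊢
  exact ⟨hx, hp.2.1.trans hpx, hxq.trans hq.2.2⟩

theorem lt_fst_iff_of_notMem_image (hB : IsBlock X B) {p q : Pt} {k : ℤ} (hp : p ∈ B)
    (hq : q ∈ B) (hk : k ∉ B.image Prod.fst) : k < p.1 ↔ k < q.1 := by
  obtain ⟨-, -, c, d, hcd⟩ := hB
  have hpcd := mem_image_of_mem Prod.fst hp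
  have hqcd := mem_image_of_mem Prod.fst hq
  rw [hcd, mem_Icc] at hk hpcd hqcd
  omega

theorem subset_or_subset_of_topPt_eq {C : Finset Pt} (hB : IsBlock X B) (hC : IsBlock X C)
    (h : TopPt B = TopPt C) : B ⊆ C ∨ C ⊆ B := by
  by_contra! hBC
  obtain ⟨⟨x, hxB, hxC⟩, ⟨y, hyC, hyB⟩⟩ := hBC.imp not_subset.1 not_subset.1
  rcases le_total x.2 y.2 with hxy | hyx
  · exact hxC (hC.mem_of_snd_le_of_le (topPt_mem hC.1) hyC (hB.subset_s16 hxB)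
      (h ▸ snd_topPt_le hxB) hxy)
  · exact hyB (hB.mem_of_snd_le_of_le (topPt_mem hB.1) hxB (hC.subset_s16 hyC)
      (h ▸ snd_topPt_le hyC) hyx)

end IsBlock

/-- `l` is a nearest point to `a`, on one of its two sides, among the points of `G` in the row of
`a`. For `a = Top(B)` these are the points `Left(B)` and `Right(B)`, treated without distinguishing
the sides. -/
structure IsRowNeighbor (G : Finset Pt) (a l : Pt) : Prop where
  mem : l ∈ G
  snd_eq : l.2 = a.2
  fst_ne : l.1 ≠ a.1
  eq_of_inRect : ∀ m ∈ G, m.2 = a.2 → m.1 ≠ a.1 → inRect a l m → m = l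

namespace IsRowNeighbor

variable {G B : Finset Pt} {l : Pt}

theorem mem_leftSet (h : IsRowNeighbor G (TopPt B) l) (hl : l.1 < (TopPt B).1) :
    l ∈ leftSet G B :=
  mem_filter.2 ⟨h.mem, h.snd_eq, hl⟩

theorem mem_rightSet (h : IsRowNeighbor G (TopPt B) l) (hl : (TopPt B).1 < l.1) :
    l ∈ rightSet G B :=
  mem_filter.2 ⟨h.mem, h.snd_eq, hl⟩

theorem leftPt_eq (h : IsRowNeighbor G (TopPt B) l) (hl : l.1 < (TopPt B).1) :
    leftPt G B = l := by
  have hmem := leftPt_mem_leftSet ⟨l, h.mem_leftSet hl⟩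
  have hle := fst_le_fst_leftPt (h.mem_leftSet hl)
  obtain ⟨hG, hrow, hlt⟩ := mem_filter.1 hmem
  have hlrow := h.snd_eq
  exact h.eq_of_inRect _ hG hrow hlt.ne (by simp only [inRect]; omega)

theorem rightPt_eq (h : IsRowNeighbor G (TopPt B) l) (hl : (TopPt B).1 < l.1) :
    rightPt G B = l := by
  have hmem := rightPt_mem_rightSet ⟨l, h.mem_rightSet hl⟩
  have hle := fst_rightPt_le_fst (h.mem_rightSet hl)
  obtain ⟨hG, hrow, hlt⟩ := mem_filter.1 hmem
  have hlrow := h.snd_eq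
  exact h.eq_of_inRect _ hG hrow hlt.ne' (by simp only [inRect]; omega)

end IsRowNeighbor

namespace IsBlock

variable {n : ℕ} {X B : Finset Pt} {r s : Pt}

theorem exists_sees_of_fst_notMem (hB : IsBlock X B) (hr : r ∈ B) (hs : s ∈ greedyG n X)
    (htop : (TopPt B).2 < s.2) (hsr : s.2 ≤ r.2) (hsB : s.1 ∉ B.image Prod.fst) :
    ∃ p ∈ B, (TopPt B).2 < p.2 ∧ ∃ q, Sees (X ∪ greedyG n X) p q ∧ q.1 = s.1 ∧
      q.2 ≤ (TopPt B).2 ∧ (q ∈ X → q.2 < (TopPt B).2) := by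
  have htopB := topPt_mem hB.1
  obtain ⟨p, hp, htp, hps, q, hpq, hqs, hq⟩ := exists_sees_of_mem_greedyG hs htop
  have hpB : p ∈ B := hB.mem_of_snd_le_of_le htopB hr hp htp.le (hps.trans hsr)
  have hqX : q ∈ X → q.2 < (TopPt B).2 := by
    intro hqX
    by_contra! hle
    exact hsB (hqs ▸ mem_image_of_mem _ (hB.mem_of_snd_le_of_le htopB hpB hqX hle hpq.snd_lt.le))
  exact ⟨p, hpB, htp, q, hpq, hqs, hq.elim (fun h => (hqX h).le) id, hqX⟩

theorem fst_notMem_image_of_snd_le (hkey : Set.InjOn Prod.fst (X : Set Pt)) (hB : IsBlock X B)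
    {m : Pt} (hm : m ∈ greedyG n X) (htop : m.2 ≤ (TopPt B).2) : m.1 ∉ B.image Prod.fst := by
  intro hmB
  obtain ⟨y, hy, hym⟩ := mem_image.1 hmB
  obtain ⟨x, hx, hxm, hlt⟩ := exists_mem_above_of_mem_greedyG hm
  have hyx : y = x := hkey (hB.subset_s16 hy) hx (hym.trans hxm.symm)
  exact (hlt.trans_le htop).not_ge (hyx ▸ snd_topPt_le hy)

theorem isRowNeighbor_of_fst_notMem (hkey : Set.InjOn Prod.fst (X : Set Pt)) (hB : IsBlock X B)
    (hpos : 0 < (TopPt B).2) (hr : r ∈ B) (hs : s ∈ greedyG n X) (htop : (TopPt B).2 < s.2)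
    (hsr : s.2 ≤ r.2) (hsB : s.1 ∉ B.image Prod.fst) :
    IsRowNeighbor (greedyG n X) (TopPt B) (s.1, (TopPt B).2) := by
  have htopB := topPt_mem hB.1
  obtain ⟨p, hpB, htp, q, ⟨hq, -, -, hempty⟩, hqs, hqtop, hqX⟩ :=
    hB.exists_sees_of_fst_notMem hr hs htop hsr hsB
  -- A point of the top row between the column of `s` and `Top(B)` lies in the rectangle with
  -- corners `p` and `q`, which is empty, so it is `q`.
  have hnearest : ∀ m ∈ greedyG n X, m.2 = (TopPt B).2 → m.1 ≠ (TopPt B).1 →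
      inRect (TopPt B) (s.1, (TopPt B).2) m → m = (s.1, (TopPt B).2) := by
    intro m hm hrow hne hrect
    have hmB := hB.fst_notMem_image_of_snd_le hkey hm hrow.le
    have hside := hB.lt_fst_iff_of_notMem_image hpB htopB hmB
    have hmp : m.1 ≠ p.1 := fun h => hmB (h ▸ mem_image_of_mem _ hpB)
    have hmq : m = q := by
      refine hempty m (mem_union_right _ hm) (by omega) ?_
      simp only [inRect] at hrect ⊢
      omega
    exact Prod.ext (hmq ▸ hqs) hrow
  have hmem : (s.1, (TopPt B).2) ∈ greedyG n X := by
    rcases hqtop.lt_or_eq with hlt | heq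
    · have hn : (TopPt B).2 ≤ n := htop.le.trans (mem_greedyG_iff.1 hs).1.2
      obtain ⟨m, hm, hrow, hne, hrect⟩ :=
        exists_mem_greedyG_inRect hkey (hB.subset_s16 htopB) hpos hn hq hlt
      rw [← hnearest m hm hrow hne (by simp only [inRect] at hrect ⊢; omega)]
      exact hm
    · have hqG : q ∈ greedyG n X := (mem_union.1 hq).resolve_left fun h => (hqX h).ne heq
      rwa [← hqs, ← heq]
  exact ⟨hmem, rfl, fun h => hsB (h ▸ mem_image_of_mem _ htopB), hnearest⟩

end IsBlock

namespace DecompTree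

variable {X : Finset Pt} (T : DecompTree X) {r : Pt}

theorem singleton_mem_nodes (hr : r ∈ X) : {r} ∈ T.nodes := by
  obtain ⟨B, hB⟩ := exists_minimal (s := T.nodes.filter (r ∈ ·))
    ⟨X, mem_filter.2 ⟨T.root_mem, hr⟩⟩
  obtain ⟨hBT, hrB⟩ := mem_filter.1 hB.prop
  have hcard : B.card = 1 := by
    by_contra hcard
    obtain ⟨C, ⟨hC, hCX, rfl, hrC⟩, -⟩ := T.children_partition B hBT hcard r hrB
    have hlt := T.ssubset_parent C hC hCX
    exact hlt.not_ge (hB.le_of_le (mem_filter.2 ⟨hC, hrC⟩) hlt.le)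
  obtain ⟨x, rfl⟩ := card_eq_one.1 hcard
  rwa [mem_singleton.1 hrB]

theorem injOn_snd (T : DecompTree X) : Set.InjOn Prod.snd (X : Set Pt) := by
  intro p hp q hq h
  have hblock := T.isBlock_nodes _ (T.singleton_mem_nodes hp)
  have hpp := mem_singleton_self p
  exact (mem_singleton.1 (hblock.mem_of_snd_le_of_le hpp hpp hq h.le h.ge)).symm

theorem RT_mem_filter (hr : r ∈ X) :
    RT T r ∈ (T.nodes.filter fun B => TopPt B = r).filter
      fun B => ∀ C ∈ T.nodes, TopPt C = r → C ⊆ B := by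
  obtain ⟨B, hB⟩ := exists_maximal (s := T.nodes.filter fun B => TopPt B = r)
    ⟨{r}, mem_filter.2 ⟨T.singleton_mem_nodes hr, topPt_singleton r⟩⟩
  obtain ⟨hBT, hBr⟩ := mem_filter.1 hB.prop
  refine headI_toList_mem ⟨B, mem_filter.2 ⟨hB.prop, fun C hC hCr => ?_⟩⟩
  exact ((T.isBlock_nodes C hC).subset_or_subset_of_topPt_eq (T.isBlock_nodes B hBT)
    (hCr.trans hBr.symm)).elim id (hB.le_of_ge (mem_filter.2 ⟨hC, hCr⟩))

theorem RT_mem_nodes (hr : r ∈ X) : RT T r ∈ T.nodes :=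
  (mem_filter.1 (mem_filter.1 (T.RT_mem_filter hr)).1).1

theorem topPt_RT (hr : r ∈ X) : TopPt (RT T r) = r :=
  (mem_filter.1 (mem_filter.1 (T.RT_mem_filter hr)).1).2

theorem subset_RT {C : Finset Pt} (hr : r ∈ X) (hC : C ∈ T.nodes) (hCr : TopPt C = r) :
    C ⊆ RT T r :=
  (mem_filter.1 (T.RT_mem_filter hr)).2 C hC hCr

theorem isBlock_parent_RT (hr : r ∈ X) (hroot : RT T r ≠ X) : IsBlock X (T.parent (RT T r)) :=
  T.isBlock_nodes _ (T.parent_mem _ (T.RT_mem_nodes hr) hroot)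

theorem mem_parent_RT (hr : r ∈ X) (hroot : RT T r ≠ X) : r ∈ T.parent (RT T r) := by
  have hmem := topPt_mem (T.isBlock_nodes _ (T.RT_mem_nodes hr)).1
  rw [T.topPt_RT hr] at hmem
  exact (T.ssubset_parent _ (T.RT_mem_nodes hr) hroot).1 hmem

theorem snd_topPt_parent_RT_lt (hr : r ∈ X) (hroot : RT T r ≠ X) :
    (TopPt (T.parent (RT T r))).2 < r.2 := by
  have hB := T.isBlock_parent_RT hr hroot
  refine (snd_topPt_le (T.mem_parent_RT hr hroot)).lt_of_ne fun h => ?_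
  have htop : TopPt (T.parent (RT T r)) = r := T.injOn_snd (hB.subset_s16 (topPt_mem hB.1)) hr h
  exact (T.ssubset_parent _ (T.RT_mem_nodes hr) hroot).2
    (T.subset_RT hr (T.parent_mem _ (T.RT_mem_nodes hr) hroot) htop)

end DecompTree

namespace IsPermPointSet

variable {n : ℕ} {X : Finset Pt}

theorem injOn_fst_s16 (hX : IsPermPointSet n X) : Set.InjOn Prod.fst (X : Set Pt) := by
  obtain ⟨σ, rfl⟩ := hX
  intro p hp q hq h
  obtain ⟨t, -, rfl⟩ := mem_image.1 hp
  obtain ⟨u, -, rfl⟩ := mem_image.1 hq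
  have htu : t = u := σ.injective (Fin.ext (by simp only at h; omega))
  rw [htu]

theorem snd_pos (hX : IsPermPointSet n X) {p : Pt} (hp : p ∈ X) : 0 < p.2 := by
  obtain ⟨σ, rfl⟩ := hX
  obtain ⟨t, -, rfl⟩ := mem_image.1 hp
  exact Int.natCast_succ_pos t

end IsPermPointSet

theorem greedy_adds_in_box_or_below_left_right_general {n : ℕ} {X B : Finset Pt}
    (hkey : Set.InjOn Prod.fst (X : Set Pt)) (hB : IsBlock X B) (hpos : 0 < (TopPt B).2)
    {r : Pt} (hr : r ∈ B) (htop : (TopPt B).2 < r.2) :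
    ∀ s ∈ greedyG n X, s.2 = r.2 →
      (∃ p ∈ B, ∃ q ∈ B, s.1 = p.1 ∧ s.2 = q.2) ∨
      ((leftSet (greedyG n X) B).Nonempty ∧
        s.1 = (leftPt (greedyG n X) B).1 ∧ (leftPt (greedyG n X) B).2 < s.2) ∨
      ((rightSet (greedyG n X) B).Nonempty ∧
        s.1 = (rightPt (greedyG n X) B).1 ∧ (rightPt (greedyG n X) B).2 < s.2) := by
  intro s hs hsr
  by_cases hsB : s.1 ∈ B.image Prod.fst
  · obtain ⟨p, hp, hps⟩ := mem_image.1 hsB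
    exact Or.inl ⟨p, hp, r, hr, hps.symm, hsr⟩
  have hts : (TopPt B).2 < s.2 := htop.trans_eq hsr.symm
  have hl := hB.isRowNeighbor_of_fst_notMem hkey hpos hr hs hts hsr.le hsB
  rcases hl.fst_ne.lt_or_gt with hlt | hgt
  · rw [hl.leftPt_eq hlt]
    exact Or.inr (Or.inl ⟨⟨_, hl.mem_leftSet hlt⟩, rfl, hts⟩)
  · rw [hl.rightPt_eq hgt]
    exact Or.inr (Or.inr ⟨⟨_, hl.mem_rightSet hgt⟩, rfl, hts⟩)

/-- Fix a decomposition tree `T` of `X`. Let `r ∈ X` with `B' := RT(r)` not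
the root, and let `B` be the parent of `B'`. Then every point `s` added by GREEDY while
processing `r` lies in `BOX(B)`, or `Left(B)` exists and `s` is below `Left(B)`, or
`Right(B)` exists and `s` is below `Right(B)`. -/
theorem greedy_adds_in_box_or_below_left_right (n : ℕ) (X : Finset Pt)
    (hX : IsPermPointSet n X) (T : DecompTree X) (r : Pt) (hr : r ∈ X)
    (hroot : RT T r ≠ X) :
    ∀ s ∈ greedyG n X, s.2 = r.2 →
      (∃ p ∈ T.parent (RT T r), ∃ q ∈ T.parent (RT T r), s.1 = p.1 ∧ s.2 = q.2) ∨
      ((leftSet (greedyG n X) (T.parent (RT T r))).Nonempty ∧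
        s.1 = (leftPt (greedyG n X) (T.parent (RT T r))).1 ∧
        (leftPt (greedyG n X) (T.parent (RT T r))).2 < s.2) ∨
      ((rightSet (greedyG n X) (T.parent (RT T r))).Nonempty ∧
        s.1 = (rightPt (greedyG n X) (T.parent (RT T r))).1 ∧
        (rightPt (greedyG n X) (T.parent (RT T r))).2 < s.2) := by
  have hB := T.isBlock_parent_RT hr hroot
  exact greedy_adds_in_box_or_below_left_right_general hX.injOn_fst_s16 hB
    (hX.snd_pos (hB.subset_s16 (topPt_mem hB.1))) (T.mem_parent_RT hr hroot)
    (T.snd_topPt_parent_RT_lt hr hroot)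
end

section
/- Let X be a permutation point set and Y a finite set of points with integer coordinates such that X ∪ Y is an arborally satisfied set. Let p, q ∈ X ∪ Y with time(q) < time(p) and key(q) < key(p), and let c be a real number that is not an integer with key(q) < c < key(p). Then there exist points a, b ∈ X ∪ Y lying in the closed axis-parallel rectangle with corners q and p such that time(a) = time(b), key(a) < c < key(b), and no point of X ∪ Y has time equal to time(a) and key strictly between key(a) and key(b). -/
open Finset

attribute [local instance] Classical.propDecidable

/-! Call `p` and `q` separated if they lie on different sides of the vertical line through `c`.
Among the separated pairs inside the rectangle of the given pair, choose one whose own rectangle is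
minimal under inclusion. A further point of the set in that rectangle would lie on one of the two
sides and could replace the corner on that side, giving a smaller rectangle. So the rectangle of the
chosen pair is empty; arboral satisfaction then makes it a horizontal segment, and emptiness of the
segment is adjacency. -/

theorem exists_separated_inter_uIcc_subset_pair {α : Type*} [DistribLattice α] {S : Set α}
    {p q : α} (hfin : (S ∩ Set.uIcc p q).Finite) (P : α → Prop) (hp : p ∈ S) (hq : q ∈ S)
    (hPp : P p) (hPq : ¬ P q) :
    ∃ a ∈ S, ∃ b ∈ S, a ∈ Set.uIcc p q ∧ b ∈ Set.uIcc p q ∧ P a ∧ ¬ P b ∧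
      S ∩ Set.uIcc a b ⊆ {a, b} := by
  let separated : Set (α × α) :=
    {x | (x.1 ∈ S ∩ Set.uIcc p q ∧ P x.1) ∧ x.2 ∈ S ∩ Set.uIcc p q ∧ ¬ P x.2}
  have hfinite : separated.Finite :=
    (hfin.prod hfin).subset fun _ hx => ⟨hx.1.1, hx.2.1⟩
  have hpq : (p, q) ∈ separated :=
    ⟨⟨⟨hp, Set.left_mem_uIcc⟩, hPp⟩, ⟨hq, Set.right_mem_uIcc⟩, hPq⟩
  obtain ⟨⟨a, b⟩, ⟨⟨⟨ha, hapq⟩, hPa⟩, ⟨hb, hbpq⟩, hPb⟩, hmin⟩ :=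
    hfinite.exists_minimalFor (fun x => Set.uIcc x.1 x.2) separated ⟨_, hpq⟩
  refine ⟨a, ha, b, hb, hapq, hbpq, hPa, hPb, fun r ⟨hr, hrab⟩ => ?_⟩
  have hrpq : r ∈ Set.uIcc p q := Set.uIcc_subset_uIcc hapq hbpq hrab
  by_cases hPr : P r
  · have hsub : Set.uIcc a b ⊆ Set.uIcc r b :=
      hmin (j := (r, b)) ⟨⟨⟨hr, hrpq⟩, hPr⟩, ⟨hb, hbpq⟩, hPb⟩ (Set.uIcc_subset_uIcc_right hrab)
    exact .inl (Set.eq_of_mem_uIcc_of_mem_uIcc hrab (hsub Set.left_mem_uIcc))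
  · have hsub : Set.uIcc a b ⊆ Set.uIcc a r :=
      hmin (j := (a, r)) ⟨⟨⟨ha, hapq⟩, hPa⟩, ⟨hr, hrpq⟩, hPr⟩ (Set.uIcc_subset_uIcc_left hrab)
    exact .inr (Set.eq_of_mem_uIcc_of_mem_uIcc' hrab (hsub Set.right_mem_uIcc))

theorem not_exists_between_of_inter_uIcc_subset_pair {α β : Type*} [Lattice α] [Lattice β]
    {S : Set (α × β)} {a b : α × β} (hempty : S ∩ Set.uIcc a b ⊆ {a, b}) (hab : a.2 = b.2) :
    ¬ ∃ r ∈ S, r.2 = a.2 ∧ a.1 < r.1 ∧ r.1 < b.1 := by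
  rintro ⟨r, hr, hra, har, hrb⟩
  have hmem : r ∈ Set.uIcc a b :=
    Set.Icc_subset_uIcc ⟨⟨har.le, hra.ge⟩, ⟨hrb.le, (hra.trans hab).le⟩⟩
  rcases hempty ⟨hr, hmem⟩ with rfl | rfl
  · exact har.false
  · exact hrb.false

theorem inRect_iff_mem_uIcc {p q r : Pt} : inRect p q r ↔ r ∈ Set.uIcc p q := by
  simp only [inRect, Set.uIcc, Set.mem_Icc, Prod.le_def, Prod.fst_inf, Prod.snd_inf,
    Prod.fst_sup, Prod.snd_sup]
  tauto

theorem ArbSat.snd_eq_of_inter_uIcc_subset_pair {S : Finset Pt} (hS : ArbSat S) {a b : Pt}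
    (ha : a ∈ S) (hb : b ∈ S) (hab : a.1 ≠ b.1) (hempty : ↑S ∩ Set.uIcc a b ⊆ {a, b}) :
    a.2 = b.2 := by
  refine ((hS a ha b hb).resolve_left hab).resolve_right ?_
  rintro ⟨r, hr, hra, hrb, hrect⟩
  exact (hempty ⟨hr, inRect_iff_mem_uIcc.mp hrect⟩).elim hra hrb

theorem adjacent_pair_crossing_line_general {S : Finset Pt} (hS : ArbSat S) {p q : Pt}
    (hp : p ∈ S) (hq : q ∈ S) {c : ℝ} (hc : ∀ m : ℤ, c ≠ (m : ℝ)) (hpc : (p.1 : ℝ) < c)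
    (hcq : c < (q.1 : ℝ)) :
    ∃ a ∈ S, ∃ b ∈ S, inRect p q a ∧ inRect p q b ∧ a.2 = b.2 ∧ (a.1 : ℝ) < c ∧ c < (b.1 : ℝ) ∧
      ¬ ∃ r ∈ S, r.2 = a.2 ∧ a.1 < r.1 ∧ r.1 < b.1 := by
  obtain ⟨a, ha, b, hb, hapq, hbpq, hac, hbc, hempty⟩ :=
    exists_separated_inter_uIcc_subset_pair (S.finite_toSet.inter_of_left _)
      (fun r : Pt => (r.1 : ℝ) < c) hp hq hpc hcq.not_gt
  have hcb : c < (b.1 : ℝ) := (not_lt.mp hbc).lt_of_ne (hc b.1)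
  have hkey : a.1 < b.1 := Int.cast_lt.mp (hac.trans hcb)
  have htime : a.2 = b.2 := hS.snd_eq_of_inter_uIcc_subset_pair ha hb hkey.ne hempty
  exact ⟨a, ha, b, hb, inRect_iff_mem_uIcc.mpr hapq, inRect_iff_mem_uIcc.mpr hbpq, htime, hac,
    hcb, not_exists_between_of_inter_uIcc_subset_pair hempty htime⟩

/-- Let `X` be a permutation point set, `Y` a finite set of integer points
with `X ∪ Y` arborally satisfied, `p, q ∈ X ∪ Y` with `time(q) < time(p)` and
`key(q) < key(p)`, and let `c` be a non-integer real with `key(q) < c < key(p)`. Then there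
are points `a, b ∈ X ∪ Y` in the closed rectangle spanned by `q` and `p` with
`time(a) = time(b)`, `key(a) < c < key(b)`, and no point of `X ∪ Y` on the open horizontal
segment between them. -/
theorem adjacent_pair_crossing_line (n : ℕ) (X Y : Finset Pt) (hX : IsPermPointSet n X)
    (hsat : ArbSat (X ∪ Y)) (p q : Pt) (hp : p ∈ X ∪ Y) (hq : q ∈ X ∪ Y)
    (ht : q.2 < p.2) (hk : q.1 < p.1)
    (c : ℝ) (hc : ∀ m : ℤ, c ≠ (m : ℝ)) (hc₁ : (q.1 : ℝ) < c) (hc₂ : c < (p.1 : ℝ)) :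
    ∃ a ∈ X ∪ Y, ∃ b ∈ X ∪ Y, inRect q p a ∧ inRect q p b ∧ a.2 = b.2 ∧
      (a.1 : ℝ) < c ∧ c < (b.1 : ℝ) ∧
      ¬ ∃ r ∈ X ∪ Y, r.2 = a.2 ∧ a.1 < r.1 ∧ r.1 < b.1 :=
  adjacent_pair_crossing_line_general hsat hq hp hc hc₁ hc₂
end
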